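/- Let λ > 0 and let F₁, …, Fₙ be classifiers, where Fᵢ : X → Yᵢ has oracle O_{Fᵢ} : X → Yᵢ and each Fᵢ is λ-resilient. Let G : (Y₁ × ⋯ × Yₙ) → Z be injective and suppose G coincides with its own oracle, i.e., the composed classifier's oracle is O_R(x) = G(⟨O_{F₁}(x), …, O_{Fₙ}(x)⟩). Then the parallel composition R(x) = G(⟨F₁(x), …, Fₙ(x)⟩) is λ-resilient with respect to the oracle O_R. (Parallel Composition Resilience, classifier-level form: combining n λ-resilient feature extractors through a correct injective classifier yields a λ-resilient classifier.) -/

import Mathlib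

/-- An input `x` is `lam`-adversarial for classifier `F` with oracle `O`. -/
def Adversarial {X Y : Type*} [SeminormedAddCommGroup X]
    (F O : X → Y) (lam : ℝ) (x : X) : Prop :=
  F x ≠ O x ∧ ∃ γ : X, ‖γ‖ ≤ lam ∧ F (x + γ) = O (x + γ) ∧ O (x + γ) = O x

/-- `F` is `lam`-resilient with respect to oracle `O`: no `lam`-adversarial inputs. -/
def Resilient {X Y : Type*} [SeminormedAddCommGroup X]
    (F O : X → Y) (lam : ℝ) : Prop :=
  ∀ x : X, ¬ Adversarial F O lam x

section Resilience

variable {X : Type*} [SeminormedAddCommGroup X] {lam : ℝ}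

theorem adversarial_comp_iff {Y Z : Type*} {G : Y → Z} (hG : Function.Injective G)
    {F O : X → Y} {x : X} :
    Adversarial (G ∘ F) (G ∘ O) lam x ↔ Adversarial F O lam x := by
  simp only [Adversarial, Function.comp_apply, hG.ne_iff, hG.eq_iff]

theorem resilient_comp_iff {Y Z : Type*} {G : Y → Z} (hG : Function.Injective G)
    {F O : X → Y} :
    Resilient (G ∘ F) (G ∘ O) lam ↔ Resilient F O lam :=
  forall_congr' fun _ => not_congr (adversarial_comp_iff hG)

variable {ι : Type*} {Y : ι → Type*} {F O : ∀ i, X → Y i}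

theorem Adversarial.exists_of_pi {x : X}
    (h : Adversarial (fun x i => F i x) (fun x i => O i x) lam x) :
    ∃ i, Adversarial (F i) (O i) lam x := by
  obtain ⟨hne, γ, hγ, hcorrect, hlabel⟩ := h
  obtain ⟨i, hi⟩ := Function.ne_iff.mp hne
  exact ⟨i, hi, γ, hγ, congrFun hcorrect i, congrFun hlabel i⟩

theorem Resilient.pi (hF : ∀ i, Resilient (F i) (O i) lam) :
    Resilient (fun x i => F i x) (fun x i => O i x) lam := fun x hx =>
  let ⟨i, hi⟩ := hx.exists_of_pi
  hF i x hi

theorem parallel_composition_resilience_classifier_general {Z : Type*}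
    (hF : ∀ i, Resilient (F i) (O i) lam)
    {G : (∀ i, Y i) → Z} (hG : Function.Injective G) :
    Resilient (fun x => G (fun i => F i x)) (fun x => G (fun i => O i x)) lam :=
  (resilient_comp_iff hG).mpr (Resilient.pi hF)

end Resilience

theorem parallel_composition_resilience_classifier
    {X Z : Type*} [SeminormedAddCommGroup X]
    (n : ℕ) (Y : Fin n → Type*)
    (lam : ℝ) (hlam : 0 < lam)
    (F : ∀ i : Fin n, X → Y i) (OF : ∀ i : Fin n, X → Y i)
    (hF : ∀ i : Fin n, Resilient (F i) (OF i) lam)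
    (G : (∀ i : Fin n, Y i) → Z) (hG : Function.Injective G) :
    Resilient (fun x => G (fun i => F i x)) (fun x => G (fun i => OF i x)) lam :=
  parallel_composition_resilience_classifier_general hF hG
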